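/- For every nontrivial real Banach space Y and every ε ∈ (0,1), the spherical Bishop–Phelps–Bollobás modulus satisfies Φ^S(ℓ₁⁽²⁾, Y, ε) ≥ min{√(2ε), 1}. In particular, if Y has property β with parameter ρ = 0, then Φ^S(ℓ₁⁽²⁾, Y, ε) = min{√(2ε), 1}. -/

import Mathlib

/-!
An operator `T` on the two-dimensional `ℓ₁` is the pair `(T e₁, T e₂)`, with `‖T‖` the larger of
the two norms (`L12.norm_map_le`).

*Lower bound.* For `0 < δ ≤ 1` with `δ² < 2ε` and a unit vector `y`, take `x = (1 - δ/2, δ/2)` and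
`T e₁ = y`, `T e₂ = (1 - δ) y`, so that `‖T x‖ = 1 - δ²/2 > 1 - ε`. A unit vector `z` with
`‖x - z‖ < δ` has `z₂ > 0`; an operator `F` of norm one attaining its norm at such a `z` has
`‖F e₂‖ = 1`, hence `‖T - F‖ ≥ 1 - ‖T e₂‖ = δ` (`PhiS_lower`). The infimum defining the modulus is
over a nonempty set, since every `T` attains its norm at `e₁` or `e₂`.

*Upper bound under property β with `ρ = 0`.* For `Y = ℝ` the correction `(z, F)` is found by a case
analysis (`exists_scalar_approx`). In general, choose a coordinate `α` with `|y*_α (T x)| > 1 - ε`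
and modify `T` in the direction `y_α` only, so that `y*_α ∘ T` becomes the scalar correction. Since
`y*_β (y_α) = 0` for `β ≠ α`, the other coordinates do not change (`exists_approx_of_beta`).
-/

noncomputable section

/-- The two-dimensional real `ℓ₁` space. -/
abbrev L12 : Type := PiLp 1 (fun _ : Fin 2 => ℝ)

/-- Property β of Lindenstrauss with parameter `ρ`. -/
def PropertyBeta (Y : Type u) [NormedAddCommGroup Y] [NormedSpace ℝ Y] (ρ : ℝ) : Prop :=
  ∃ (Λ : Type u) (yv : Λ → Y) (yf : Λ → (Y →L[ℝ] ℝ)),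
    (∀ α, ‖yv α‖ = 1) ∧ (∀ α, ‖yf α‖ = 1) ∧ (∀ α, yf α (yv α) = 1) ∧
    (∀ α γ, α ≠ γ → |yf α (yv γ)| ≤ ρ) ∧
    (∀ v : Y, IsLUB (Set.range fun α => |yf α v|) ‖v‖)

/-- The spherical Bishop–Phelps–Bollobás modulus `Φ^S(X,Y,ε)` of a pair of spaces. -/
def PhiS (X Y : Type*) [NormedAddCommGroup X] [NormedSpace ℝ X]
    [NormedAddCommGroup Y] [NormedSpace ℝ Y] (ε : ℝ) : ℝ :=
  sInf {δ : ℝ | 0 < δ ∧ ∀ (x : X) (T : X →L[ℝ] Y), ‖x‖ = 1 → ‖T‖ = 1 → 1 - ε < ‖T x‖ →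
    ∃ (z : X) (F : X →L[ℝ] Y), ‖z‖ = 1 ∧ ‖F‖ = 1 ∧ ‖F z‖ = 1 ∧ ‖x - z‖ < δ ∧ ‖T - F‖ < δ}

/-- Given a vector `(a, b)` of the unit sphere of `ℓ₁⁽²⁾` and a functional `(u, v)`, there are a unit
vector `(p, q)` and a functional `(s, t)` in the dual unit ball attaining the value `±1` at `(p, q)`,
both at distance less than `δ` from the original ones. -/
def ScalarApprox (δ a b u v : ℝ) : Prop :=
  ∃ p q s t : ℝ, |p| + |q| = 1 ∧ |s| ≤ 1 ∧ |t| ≤ 1 ∧ |p * s + q * t| = 1 ∧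
    |a - p| + |b - q| < δ ∧ |u - s| < δ ∧ |v - t| < δ

theorem ScalarApprox.swap {δ a b u v : ℝ} (h : ScalarApprox δ a b u v) :
    ScalarApprox δ b a v u := by
  obtain ⟨p, q, s, t, h1, h2, h3, h4, h5, h6, h7⟩ := h
  exact ⟨q, p, t, s, by rwa [add_comm], h3, h2, by rwa [add_comm], by rwa [add_comm], h7, h6⟩

theorem ScalarApprox.neg_left {δ a b u v : ℝ} (h : ScalarApprox δ a b u v) :
    ScalarApprox δ (-a) b (-u) v := by
  obtain ⟨p, q, s, t, h1, h2, h3, h4, h5, h6, h7⟩ := h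
  refine ⟨-p, q, -s, t, by rwa [abs_neg], by rwa [abs_neg], h3, by rwa [neg_mul_neg], ?_, ?_, h7⟩
  · rwa [show -a - -p = -(a - p) by ring, abs_neg]
  · rwa [show -u - -s = -(u - s) by ring, abs_neg]

theorem ScalarApprox.neg_functional {δ a b u v : ℝ} (h : ScalarApprox δ a b u v) :
    ScalarApprox δ a b (-u) (-v) := by
  obtain ⟨p, q, s, t, h1, h2, h3, h4, h5, h6, h7⟩ := h
  refine ⟨p, q, -s, -t, h1, by rwa [abs_neg], by rwa [abs_neg], ?_, h5, ?_, ?_⟩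
  · rwa [show p * -s + q * -t = -(p * s + q * t) by ring, abs_neg]
  · rwa [show -u - -s = -(u - s) by ring, abs_neg]
  · rwa [show -v - -t = -(v - t) by ring, abs_neg]

/-- The scalar correction, normalized by symmetry to a vector in the positive quadrant, a positive
value of the functional, and `v ≤ u`. -/
theorem scalarApprox_of_normalized {ε δ a b u v : ℝ} (hε1 : ε < 1) (hδε : ε < δ)
    (hδ : 2 * ε < δ ^ 2 ∨ 1 < δ) (ha : 0 ≤ a) (hb : 0 ≤ b) (hab : a + b = 1)
    (hu : |u| ≤ 1) (hv : |v| ≤ 1) (hT : 1 - ε < a * u + b * v) (huv : v ≤ u) :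
    ScalarApprox δ a b u v := by
  rw [abs_le] at hu hv
  have hu1 : 1 - u < ε := by nlinarith
  have hε0 : 0 < ε := by linarith
  have hδ0 : 0 < δ := by linarith
  have hus : |u - 1| < δ := by rw [abs_lt]; constructor <;> linarith
  by_cases hb2 : 2 * b < δ
  · -- The vector is close to `(1, 0)`.
    refine ⟨1, 0, 1, v, by simp, by simp, abs_le.2 hv, by simp, ?_, hus, by simpa⟩
    rw [abs_of_nonpos (by linarith), abs_of_nonneg (by linarith)]
    linarith
  push Not at hb2
  by_cases hv1 : 1 - v < δ
  · -- The functional is close to `(1, 1)`, which attains its norm on the whole positive face.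
    refine ⟨a, b, 1, 1, by rwa [abs_of_nonneg ha, abs_of_nonneg hb], by simp, by simp,
      by simp [hab], by simpa, hus, ?_⟩
    rw [abs_lt]; constructor <;> linarith
  push Not at hv1
  rcases hδ with h | h
  · -- Here `δ² ≤ 2 b (1 - v) < 2 ε`, a contradiction.
    exfalso
    nlinarith [mul_le_mul hb2 hv1 hδ0.le (by linarith)]
  · -- Here `v < 0` and `b > 1/2`: the functional `(1, -1)` at the vector `(0, 1)` is close enough.
    refine ⟨0, 1, 1, -1, by simp, by simp, by simp, by simp, ?_, hus, ?_⟩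
    · rw [abs_of_nonneg (by linarith), abs_of_nonpos (by linarith)]
      linarith
    · rw [abs_lt]; constructor <;> linarith

/-- The Bishop–Phelps–Bollobás correction for the pair `(ℓ₁⁽²⁾, ℝ)`. -/
theorem exists_scalar_approx {ε δ a b u v : ℝ} (hε1 : ε < 1) (hδε : ε < δ)
    (hδ : 2 * ε < δ ^ 2 ∨ 1 < δ) (hab : |a| + |b| = 1)
    (hu : |u| ≤ 1) (hv : |v| ≤ 1) (hT : 1 - ε < |a * u + b * v|) :
    ScalarApprox δ a b u v := by
  wlog hb : 0 ≤ b generalizing a b u v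
  · have := (this (a := a) (b := -b) (u := u) (v := -v) (by rwa [abs_neg]) hu (by rwa [abs_neg])
      (by rwa [neg_mul_neg]) (by linarith)).swap.neg_left.swap
    simpa using this
  wlog ha : 0 ≤ a generalizing a b u v
  · have := (this (a := -a) (b := b) (u := -u) (v := v) (by rwa [abs_neg]) (by rwa [abs_neg]) hv
      (by rwa [neg_mul_neg]) hb (by linarith)).neg_left
    simpa using this
  wlog hpos : 0 ≤ a * u + b * v generalizing a b u v
  · have := (this (a := a) (b := b) (u := -u) (v := -v) hab (by rwa [abs_neg]) (by rwa [abs_neg])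
      (by rwa [show a * -u + b * -v = -(a * u + b * v) by ring, abs_neg]) hb ha
      (by linarith)).neg_functional
    simpa using this
  rw [abs_of_nonneg hpos] at hT
  rw [abs_of_nonneg ha, abs_of_nonneg hb] at hab
  rcases le_total v u with h | h
  · exact scalarApprox_of_normalized hε1 hδε hδ ha hb hab hu hv hT h
  · exact (scalarApprox_of_normalized hε1 hδε hδ hb ha (by linarith) hv hu (by linarith) h).swap

/-- The vector `(a, b)` of `ℓ₁⁽²⁾`. -/
def L12.vec (a b : ℝ) : L12 := WithLp.toLp 1 ![a, b]

theorem L12.norm_eq (x : L12) : ‖x‖ = |x 0| + |x 1| := by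
  simp [PiLp.norm_eq_of_L1]

theorem L12.norm_vec (a b : ℝ) : ‖L12.vec a b‖ = |a| + |b| := by
  simp [L12.norm_eq, L12.vec]

theorem L12.norm_sub_vec (x : L12) (a b : ℝ) :
    ‖x - L12.vec a b‖ = |x 0 - a| + |x 1 - b| := by
  simp [L12.norm_eq, L12.vec]

section Maps

variable {Y : Type*} [NormedAddCommGroup Y] [NormedSpace ℝ Y]

theorem L12.map_eq (T : L12 →L[ℝ] Y) (x : L12) :
    T x = x 0 • T (L12.vec 1 0) + x 1 • T (L12.vec 0 1) := by
  rw [← map_smul, ← map_smul, ← map_add]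
  congr 1
  ext i
  fin_cases i <;> simp [L12.vec]

theorem L12.norm_map_le (T : L12 →L[ℝ] Y) {M : ℝ} (h0 : ‖T (L12.vec 1 0)‖ ≤ M)
    (h1 : ‖T (L12.vec 0 1)‖ ≤ M) : ‖T‖ ≤ M := by
  refine T.opNorm_le_bound ((norm_nonneg _).trans h0) fun x => ?_
  rw [L12.map_eq, L12.norm_eq]
  refine (norm_add_le _ _).trans ?_
  rw [norm_smul, norm_smul, Real.norm_eq_abs, Real.norm_eq_abs]
  nlinarith [mul_le_mul_of_nonneg_left h0 (abs_nonneg (x 0)),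
    mul_le_mul_of_nonneg_left h1 (abs_nonneg (x 1))]

theorem L12.norm_map_lt (T : L12 →L[ℝ] Y) {M : ℝ} (h0 : ‖T (L12.vec 1 0)‖ < M)
    (h1 : ‖T (L12.vec 0 1)‖ < M) : ‖T‖ < M :=
  (L12.norm_map_le T (le_max_left _ _) (le_max_right _ _)).trans_lt (max_lt h0 h1)

theorem L12.norm_map_e1_le (T : L12 →L[ℝ] Y) : ‖T (L12.vec 1 0)‖ ≤ ‖T‖ := by
  simpa [L12.norm_vec] using T.le_opNorm (L12.vec 1 0)

theorem L12.norm_map_e2_le (T : L12 →L[ℝ] Y) : ‖T (L12.vec 0 1)‖ ≤ ‖T‖ := by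
  simpa [L12.norm_vec] using T.le_opNorm (L12.vec 0 1)

/-- The operator on `ℓ₁⁽²⁾` that sends the two basis vectors to `y` and `w`. -/
def L12.mk (y w : Y) : L12 →L[ℝ] Y :=
  (PiLp.proj 1 (fun _ : Fin 2 => ℝ) 0 : L12 →L[ℝ] ℝ).smulRight y +
    (PiLp.proj 1 (fun _ : Fin 2 => ℝ) 1 : L12 →L[ℝ] ℝ).smulRight w

theorem L12.mk_vec (y w : Y) (a b : ℝ) : L12.mk y w (L12.vec a b) = a • y + b • w := by
  simp [L12.mk, L12.vec]

/-- The set of admissible `δ` contains `3`: every operator attains its norm at a basis vector. -/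
theorem PhiS_set_nonempty (ε : ℝ) :
    {δ : ℝ | 0 < δ ∧ ∀ (x : L12) (T : L12 →L[ℝ] Y), ‖x‖ = 1 → ‖T‖ = 1 → 1 - ε < ‖T x‖ →
      ∃ (z : L12) (F : L12 →L[ℝ] Y), ‖z‖ = 1 ∧ ‖F‖ = 1 ∧ ‖F z‖ = 1 ∧ ‖x - z‖ < δ ∧
        ‖T - F‖ < δ}.Nonempty := by
  refine ⟨3, by norm_num, fun x T hx hT _ => ?_⟩
  have key : ∃ z : L12, ‖z‖ = 1 ∧ ‖T z‖ = 1 := by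
    by_contra! hne
    have h0 : ‖L12.vec 1 0‖ = 1 := by simp [L12.norm_vec]
    have h1 : ‖L12.vec 0 1‖ = 1 := by simp [L12.norm_vec]
    have := L12.norm_map_lt T (lt_of_le_of_ne (hT ▸ L12.norm_map_e1_le T) (hne _ h0))
      (lt_of_le_of_ne (hT ▸ L12.norm_map_e2_le T) (hne _ h1))
    exact absurd hT this.ne
  obtain ⟨z, hz, hTz⟩ := key
  refine ⟨z, T, hz, hT, hTz, ?_, by simp⟩
  linarith [norm_sub_le x z]

/-- No `δ ≤ 1` with `δ² < 2ε` is admissible. -/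
theorem PhiS_lower [Nontrivial Y] {ε δ : ℝ} (hδ0 : 0 < δ) (hδ1 : δ ≤ 1) (hδ : δ ^ 2 < 2 * ε)
    (H : ∀ (x : L12) (T : L12 →L[ℝ] Y), ‖x‖ = 1 → ‖T‖ = 1 → 1 - ε < ‖T x‖ →
      ∃ (z : L12) (F : L12 →L[ℝ] Y), ‖z‖ = 1 ∧ ‖F‖ = 1 ∧ ‖F z‖ = 1 ∧ ‖x - z‖ < δ ∧
        ‖T - F‖ < δ) : False := by
  obtain ⟨y, hy⟩ := exists_norm_eq Y zero_le_one
  have hT1 : L12.mk y ((1 - δ) • y) (L12.vec 1 0) = y := by simp [L12.mk_vec]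
  have hT2 : L12.mk y ((1 - δ) • y) (L12.vec 0 1) = (1 - δ) • y := by simp [L12.mk_vec]
  have hn2 : ‖(1 - δ) • y‖ = 1 - δ := by
    rw [norm_smul, hy, mul_one, Real.norm_eq_abs, abs_of_nonneg (by linarith)]
  have hT : ‖L12.mk y ((1 - δ) • y)‖ = 1 := by
    apply le_antisymm
    · apply L12.norm_map_le
      · rw [hT1, hy]
      · rw [hT2, hn2]; linarith
    · simpa [hT1, hy] using L12.norm_map_e1_le (L12.mk y ((1 - δ) • y))
  have hTx : ‖L12.mk y ((1 - δ) • y) (L12.vec (1 - δ / 2) (δ / 2))‖ = 1 - δ ^ 2 / 2 := by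
    rw [L12.mk_vec, smul_smul, ← add_smul, norm_smul, hy, mul_one, Real.norm_eq_abs,
      abs_of_nonneg (by nlinarith)]
    ring
  have hx : ‖L12.vec (1 - δ / 2) (δ / 2)‖ = 1 := by
    rw [L12.norm_vec, abs_of_nonneg (by linarith), abs_of_nonneg (by linarith)]; ring
  obtain ⟨z, F, hz, hF, hFz, hxz, hTF⟩ := H _ _ hx hT (by rw [hTx]; linarith)
  rw [norm_sub_rev, L12.norm_sub_vec] at hxz
  rw [L12.norm_eq] at hz
  have hz1 : 0 < z 1 := by
    by_contra! h
    rw [abs_of_nonpos h] at hz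
    rw [abs_of_nonpos (show z 1 - δ / 2 ≤ 0 by linarith)] at hxz
    have h1 := le_abs_self (z 0 - (1 - δ / 2))
    have h2 := neg_abs_le (z 0 - (1 - δ / 2))
    rcases abs_cases (z 0) with ⟨h3, _⟩ | ⟨h3, _⟩ <;> linarith
  have hF1 : ‖F (L12.vec 1 0)‖ ≤ 1 := hF ▸ L12.norm_map_e1_le F
  -- The coordinate `z 1` is positive, so norm attainment at `z` forces it at the second basis vector.
  have hF2 : 1 ≤ ‖F (L12.vec 0 1)‖ := by
    have h := hFz.symm.le
    rw [L12.map_eq] at h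
    have h2 := h.trans (norm_add_le _ _)
    rw [norm_smul, norm_smul, Real.norm_eq_abs, Real.norm_eq_abs] at h2
    rw [abs_of_pos hz1] at hz h2
    have h3 := mul_le_mul_of_nonneg_left hF1 (abs_nonneg (z 0))
    by_contra! h4
    nlinarith [mul_lt_mul_of_pos_left h4 hz1]
  have h5 := L12.norm_map_e2_le (L12.mk y ((1 - δ) • y) - F)
  rw [sub_apply, hT2, norm_sub_rev] at h5
  have h6 := norm_sub_norm_le (F (L12.vec 0 1)) ((1 - δ) • y)
  rw [hn2] at h6
  linarith

/-- Property β with `ρ = 0` lifts the scalar correction to `Y`: the modification of `T` in the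
direction of one `yv α` is seen by the functional `yf α` only. -/
theorem exists_approx_of_beta (hβ : PropertyBeta Y 0) {ε δ : ℝ} (hε1 : ε < 1)
    (hδε : ε < δ) (hδ : 2 * ε < δ ^ 2 ∨ 1 < δ) (x : L12) (T : L12 →L[ℝ] Y) (hx : ‖x‖ = 1)
    (hT : ‖T‖ = 1) (hTx : 1 - ε < ‖T x‖) :
    ∃ (z : L12) (F : L12 →L[ℝ] Y), ‖z‖ = 1 ∧ ‖F‖ = 1 ∧ ‖F z‖ = 1 ∧ ‖x - z‖ < δ ∧
      ‖T - F‖ < δ := by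
  obtain ⟨Λ, yv, yf, hyv, -, hone, hzero, hlub⟩ := hβ
  obtain ⟨_, ⟨α, rfl⟩, hα, -⟩ := (hlub (T x)).exists_between hTx
  have hle : ∀ (β : Λ) (w : Y), |yf β w| ≤ ‖w‖ := fun β w => (hlub w).1 ⟨β, rfl⟩
  have hT1 : ‖T (L12.vec 1 0)‖ ≤ 1 := hT ▸ L12.norm_map_e1_le T
  have hT2 : ‖T (L12.vec 0 1)‖ ≤ 1 := hT ▸ L12.norm_map_e2_le T
  obtain ⟨p, q, s, t, hpq, hs, ht, hatt, hd, hsd, htd⟩ :=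
    exists_scalar_approx (δ := δ) (a := x 0) (b := x 1) (u := yf α (T (L12.vec 1 0)))
      (v := yf α (T (L12.vec 0 1))) hε1 hδε hδ (by rw [← L12.norm_eq, hx])
      ((hle _ _).trans hT1) ((hle _ _).trans hT2) (by
        rw [L12.map_eq T x] at hα
        simpa using hα)
  -- Replacing the `α`-th coordinate of `w` by `r` keeps it in the unit ball.
  have hrepl : ∀ (w : Y) (r : ℝ), ‖w‖ ≤ 1 → |r| ≤ 1 →
      ‖w + (r - yf α w) • yv α‖ ≤ 1 := by
    intro w r hw hr
    refine (hlub _).2 ?_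
    rintro _ ⟨β, rfl⟩
    by_cases hβα : β = α
    · subst hβα
      simpa [hone] using hr
    · have h0 : yf β (yv α) = 0 := abs_nonpos_iff.1 (hzero β α hβα)
      simpa [h0] using (hle β w).trans hw
  have hdist : ∀ (w : Y) (r : ℝ), ‖w - (w + (r - yf α w) • yv α)‖ = |yf α w - r| := by
    intro w r
    rw [sub_add_cancel_left, norm_neg, norm_smul, hyv, mul_one, Real.norm_eq_abs, abs_sub_comm]
  set F : L12 →L[ℝ] Y := L12.mk
    (T (L12.vec 1 0) + (s - yf α (T (L12.vec 1 0))) • yv α)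
    (T (L12.vec 0 1) + (t - yf α (T (L12.vec 0 1))) • yv α) with hFdef
  have hF1 : F (L12.vec 1 0) = T (L12.vec 1 0) + (s - yf α (T (L12.vec 1 0))) • yv α := by
    simp [hFdef, L12.mk_vec]
  have hF2 : F (L12.vec 0 1) = T (L12.vec 0 1) + (t - yf α (T (L12.vec 0 1))) • yv α := by
    simp [hFdef, L12.mk_vec]
  have hz : ‖L12.vec p q‖ = 1 := by rw [L12.norm_vec, hpq]
  have hFle : ‖F‖ ≤ 1 := L12.norm_map_le F (hF1 ▸ hrepl _ _ hT1 hs) (hF2 ▸ hrepl _ _ hT2 ht)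
  have hFz : 1 ≤ ‖F (L12.vec p q)‖ := by
    refine le_trans (le_of_eq ?_) (hle α _)
    rw [hFdef, L12.mk_vec]
    simp only [map_add, map_smul, smul_eq_mul, hone, mul_one, add_sub_cancel, hatt]
  have hFz' : ‖F (L12.vec p q)‖ ≤ ‖F‖ := by
    simpa [hz] using F.le_opNorm (L12.vec p q)
  refine ⟨L12.vec p q, F, hz, by linarith, by linarith, by rwa [L12.norm_sub_vec], ?_⟩
  apply L12.norm_map_lt
  · rwa [sub_apply, hF1, hdist]
  · rwa [sub_apply, hF2, hdist]

end Maps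

theorem phiS_l1_lower_bound
    (Y : Type*) [NormedAddCommGroup Y] [NormedSpace ℝ Y] [CompleteSpace Y] [Nontrivial Y]
    (ε : ℝ) (hε : ε ∈ Set.Ioo (0 : ℝ) 1) :
    min (Real.sqrt (2 * ε)) 1 ≤ PhiS L12 Y ε ∧
      (PropertyBeta Y 0 → PhiS L12 Y ε = min (Real.sqrt (2 * ε)) 1) := by
  obtain ⟨hε0, hε1⟩ := hε
  have hlow : min (Real.sqrt (2 * ε)) 1 ≤ PhiS L12 Y ε := by
    refine le_csInf (PhiS_set_nonempty ε) ?_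
    rintro δ ⟨hδ0, H⟩
    by_contra! hlt
    obtain ⟨h1, h2⟩ := lt_min_iff.1 hlt
    exact PhiS_lower hδ0 h2.le ((Real.lt_sqrt hδ0.le).1 h1) H
  refine ⟨hlow, fun hβ => le_antisymm (le_of_forall_gt_imp_ge_of_dense fun δ hδ => ?_) hlow⟩
  have hδ0 : 0 < δ := lt_trans (lt_min (Real.sqrt_pos.2 (by linarith)) one_pos) hδ
  have hcase : 2 * ε < δ ^ 2 ∨ 1 < δ :=
    (min_lt_iff.1 hδ).imp_left (Real.sqrt_lt' hδ0).1
  have hδε : ε < δ := by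
    rcases hcase with h | h
    · nlinarith
    · linarith
  exact csInf_le ⟨0, fun _ h => h.1.le⟩
    ⟨hδ0, fun x T => exists_approx_of_beta hβ hε1 hδε hcase x T⟩
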